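/- Let h > 0, let k ∈ ℝ² with k ≠ 0, and let g₀ ∈ ℝ² satisfy k·g₀ = 0. Define V : ℝ² × ℝ → ℝ² by V(x, z) = cos(k·x) · (cosh(‖k‖(z+h)) / (‖k‖ · sinh(‖k‖·h))) · g₀. Then: (i) each component of V is harmonic on ℝ³, i.e. the sum of its second partial derivatives with respect to x₁, x₂ and z vanishes; (ii) ∂_z V(x, 0) = cos(k·x) g₀ and ∂_z V(x, −h) = 0 for all x; (iii) the vertical average V̄(x) := (1/h) ∫_{−h}^{0} V(x, z) dz satisfies div_H V̄(x) := ∂_{x₁}V̄₁(x) + ∂_{x₂}V̄₂(x) = 0 for all x ∈ ℝ². In particular (V, P_s ≡ 0) solves the stationary hydrostatic Stokes equations −ΔV + ∇_H P_s = 0, div_H V̄ = 0 with Neumann boundary data ∂_z V = cos(k·x) g₀ on the top and ∂_z V = 0 on the bottom. -/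

import Mathlib

/-!
The field is separated: `V (x, z) = cos (k·x) φ(z) g₀`. With `κ = ‖k‖`, the plane wave is an
eigenfunction of the horizontal Laplacian for the eigenvalue `-κ²` and `φ'' = κ² φ`, so the two
contributions cancel. The constant in `φ` normalises `φ'(0) = 1`, while `φ'(-h) = 0` because `φ` is
even about `-h`. Averaging in `z` only multiplies the horizontal field `cos (k·x) g₀` by a constant,
and the gradient of the wave is parallel to `k`, hence orthogonal to `g₀`.
-/

namespace HydrostaticStokes

section Operators

/-- The horizontal Laplacian `∂₁² + ∂₂²`, through iterated one-variable derivatives. -/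
noncomputable def horizontalLaplacian (f : ℝ → ℝ → ℝ) (x₁ x₂ : ℝ) : ℝ :=
  deriv (deriv fun t => f t x₂) x₁ + deriv (deriv fun t => f x₁ t) x₂

/-- The full Laplacian `Δ = Δ_H + ∂_z²` on the cylinder. -/
noncomputable def laplacian (u : ℝ → ℝ → ℝ → ℝ) (x₁ x₂ z : ℝ) : ℝ :=
  horizontalLaplacian (fun y₁ y₂ => u y₁ y₂ z) x₁ x₂ + deriv (deriv fun t => u x₁ x₂ t) z

/-- The horizontal divergence `div_H W = ∂₁W₁ + ∂₂W₂`. -/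
noncomputable def horizontalDiv (W : ℝ → ℝ → ℝ × ℝ) (x₁ x₂ : ℝ) : ℝ :=
  deriv (fun t => (W t x₂).1) x₁ + deriv (fun t => (W x₁ t).2) x₂

/-- The average of `w` over a water column of depth `h`, whose surface is at height `0`. -/
noncomputable def depthAverage {E : Type*} [NormedAddCommGroup E] [NormedSpace ℝ E]
    (h : ℝ) (w : ℝ → E) : E :=
  (1 / h) • ∫ z in (-h)..(0 : ℝ), w z

end Operators

section SeparatedFields

variable {E : Type*} [NormedAddCommGroup E] [NormedSpace ℝ E]

lemma horizontalLaplacian_mul_const (f : ℝ → ℝ → ℝ) (c x₁ x₂ : ℝ) :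
    horizontalLaplacian (fun y₁ y₂ => f y₁ y₂ * c) x₁ x₂ = horizontalLaplacian f x₁ x₂ * c := by
  simp only [horizontalLaplacian, deriv_mul_const_field', deriv_mul_const_field, add_mul]

lemma laplacian_separated_eq_zero {f : ℝ → ℝ → ℝ} {φ : ℝ → ℝ} {μ x₁ x₂ z : ℝ}
    (hf : horizontalLaplacian f x₁ x₂ = -μ * f x₁ x₂) (hφ : deriv (deriv φ) z = μ * φ z) (c : ℝ) :
    laplacian (fun y₁ y₂ t => f y₁ y₂ * φ t * c) x₁ x₂ z = 0 := by
  simp only [laplacian, horizontalLaplacian_mul_const, deriv_mul_const_field',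
    deriv_mul_const_field, deriv_const_mul_field, hf, hφ]
  ring

lemma deriv_const_mul_smul_const {φ : ℝ → ℝ} {z : ℝ} (hφ : DifferentiableAt ℝ φ z) (a : ℝ)
    (v : E) : deriv (fun t => (a * φ t) • v) z = (a * deriv φ z) • v := by
  rw [deriv_smul_const (hφ.const_mul a), deriv_const_mul_field]

lemma depthAverage_const_mul_smul_const [CompleteSpace E] (h a : ℝ) (φ : ℝ → ℝ) (v : E) :
    depthAverage h (fun z => (a * φ z) • v) = (a * depthAverage h φ) • v := by
  simp only [depthAverage, intervalIntegral.integral_smul_const,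
    intervalIntegral.integral_const_mul, smul_smul, smul_eq_mul, mul_left_comm]

lemma horizontalDiv_mul_const_smul_const (f : ℝ → ℝ → ℝ) (c : ℝ) (v : ℝ × ℝ) (x₁ x₂ : ℝ) :
    horizontalDiv (fun y₁ y₂ => (f y₁ y₂ * c) • v) x₁ x₂ =
      c * (deriv (fun t => f t x₂) x₁ * v.1 + deriv (fun t => f x₁ t) x₂ * v.2) := by
  simp only [horizontalDiv, Prod.smul_fst, Prod.smul_snd, smul_eq_mul, deriv_mul_const_field]
  ring

end SeparatedFields

section PlaneWave

/-- The real plane wave `cos (k·x)` with wave vector `k = (k₁, k₂)`. -/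
noncomputable def planeWave (k₁ k₂ x₁ x₂ : ℝ) : ℝ :=
  Real.cos (k₁ * x₁ + k₂ * x₂)

lemma planeWave_swap (k₁ k₂ x₁ x₂ : ℝ) : planeWave k₁ k₂ x₁ x₂ = planeWave k₂ k₁ x₂ x₁ := by
  rw [planeWave, planeWave, add_comm]

lemma deriv_planeWave_left (k₁ k₂ x₂ : ℝ) :
    deriv (fun t => planeWave k₁ k₂ t x₂) = fun t => -k₁ * Real.sin (k₁ * t + k₂ * x₂) := by
  funext t
  have hphase : HasDerivAt (fun t => k₁ * t + k₂ * x₂) k₁ t :=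
    (hasDerivAt_const_mul k₁).add_const _
  exact hphase.cos.deriv.trans (by ring)

lemma deriv_planeWave_right (k₁ k₂ x₁ : ℝ) :
    deriv (fun t => planeWave k₁ k₂ x₁ t) = fun t => -k₂ * Real.sin (k₁ * x₁ + k₂ * t) := by
  simp only [planeWave_swap k₁ k₂, deriv_planeWave_left, add_comm]

lemma deriv_deriv_planeWave_left (k₁ k₂ x₁ x₂ : ℝ) :
    deriv (deriv fun t => planeWave k₁ k₂ t x₂) x₁ = -k₁ ^ 2 * planeWave k₁ k₂ x₁ x₂ := by
  have hphase : HasDerivAt (fun t => k₁ * t + k₂ * x₂) k₁ x₁ :=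
    (hasDerivAt_const_mul k₁).add_const _
  rw [deriv_planeWave_left, (hphase.sin.const_mul (-k₁)).deriv, planeWave]
  ring

lemma horizontalLaplacian_planeWave (k₁ k₂ x₁ x₂ : ℝ) :
    horizontalLaplacian (planeWave k₁ k₂) x₁ x₂ =
      -(k₁ ^ 2 + k₂ ^ 2) * planeWave k₁ k₂ x₁ x₂ := by
  have hright : deriv (deriv fun t => planeWave k₁ k₂ x₁ t) x₂ =
      -k₂ ^ 2 * planeWave k₁ k₂ x₁ x₂ := by
    simp only [planeWave_swap k₁ k₂, deriv_deriv_planeWave_left]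
  rw [horizontalLaplacian, deriv_deriv_planeWave_left, hright]
  ring

lemma horizontalDiv_planeWave_smul_eq_zero {k₁ k₂ : ℝ} {v : ℝ × ℝ}
    (hv : k₁ * v.1 + k₂ * v.2 = 0) (c x₁ x₂ : ℝ) :
    horizontalDiv (fun y₁ y₂ => (planeWave k₁ k₂ y₁ y₂ * c) • v) x₁ x₂ = 0 := by
  rw [horizontalDiv_mul_const_smul_const, deriv_planeWave_left, deriv_planeWave_right]
  linear_combination (-c * Real.sin (k₁ * x₁ + k₂ * x₂)) * hv

end PlaneWave

section VerticalProfile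

/-- The vertical profile `φ` of a mode of horizontal wave number `κ`: for `κ * h ≠ 0` it solves
`φ'' = κ² φ`, `φ'(0) = 1`, `φ'(-h) = 0`. -/
noncomputable def verticalProfile (κ h z : ℝ) : ℝ :=
  Real.cosh (κ * (z + h)) / (κ * Real.sinh (κ * h))

lemma hasDerivAt_mul_add_const (κ h z : ℝ) : HasDerivAt (fun t => κ * (t + h)) κ z :=
  (hasDerivAt_const_mul κ).comp_add_const z h

lemma hasDerivAt_verticalProfile (κ h z : ℝ) :
    HasDerivAt (verticalProfile κ h)
      (Real.sinh (κ * (z + h)) * κ / (κ * Real.sinh (κ * h))) z :=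
  (hasDerivAt_mul_add_const κ h z).cosh.div_const _

lemma deriv_deriv_verticalProfile (κ h z : ℝ) :
    deriv (deriv (verticalProfile κ h)) z = κ ^ 2 * verticalProfile κ h z := by
  have hderiv : deriv (verticalProfile κ h) =
      fun t => Real.sinh (κ * (t + h)) * κ / (κ * Real.sinh (κ * h)) :=
    funext fun t => (hasDerivAt_verticalProfile κ h t).deriv
  have hsinh := (hasDerivAt_mul_add_const κ h z).sinh
  rw [hderiv, ((hsinh.mul_const κ).div_const _).deriv, verticalProfile]
  ring

lemma deriv_verticalProfile_zero {κ h : ℝ} (hκ : κ ≠ 0) (hh : h ≠ 0) :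
    deriv (verticalProfile κ h) 0 = 1 := by
  have hsinh : Real.sinh (κ * h) ≠ 0 := Real.sinh_ne_zero.mpr (mul_ne_zero hκ hh)
  rw [(hasDerivAt_verticalProfile κ h 0).deriv, zero_add, mul_comm _ κ,
    div_self (mul_ne_zero hκ hsinh)]

lemma deriv_verticalProfile_neg (κ h : ℝ) : deriv (verticalProfile κ h) (-h) = 0 := by
  rw [(hasDerivAt_verticalProfile κ h (-h)).deriv, neg_add_cancel, mul_zero, Real.sinh_zero,
    zero_mul, zero_div]

end VerticalProfile

section Mode

/-- The Fourier mode with wave vector `(k₁, k₂)` and amplitude `g` in a layer of depth `h`, whose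
Neumann datum on the top is `cos (k·x) g`. -/
noncomputable def neumannMode (h k₁ k₂ : ℝ) (g : ℝ × ℝ) (x₁ x₂ z : ℝ) : ℝ × ℝ :=
  (planeWave k₁ k₂ x₁ x₂ * verticalProfile √(k₁ ^ 2 + k₂ ^ 2) h z) • g

lemma laplacian_planeWave_mul_verticalProfile (h k₁ k₂ c x₁ x₂ z : ℝ) :
    laplacian (fun y₁ y₂ t =>
      planeWave k₁ k₂ y₁ y₂ * verticalProfile √(k₁ ^ 2 + k₂ ^ 2) h t * c) x₁ x₂ z = 0 := by
  refine laplacian_separated_eq_zero (horizontalLaplacian_planeWave k₁ k₂ x₁ x₂) ?_ c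
  rw [deriv_deriv_verticalProfile, Real.sq_sqrt (by positivity)]

lemma deriv_neumannMode (h k₁ k₂ : ℝ) (g : ℝ × ℝ) (x₁ x₂ z : ℝ) :
    deriv (neumannMode h k₁ k₂ g x₁ x₂) z =
      (planeWave k₁ k₂ x₁ x₂ * deriv (verticalProfile √(k₁ ^ 2 + k₂ ^ 2) h) z) • g :=
  deriv_const_mul_smul_const (hasDerivAt_verticalProfile _ h z).differentiableAt _ g

lemma deriv_neumannMode_top {h k₁ k₂ : ℝ} (hh : h ≠ 0) (hk : (k₁, k₂) ≠ (0, 0)) (g : ℝ × ℝ)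
    (x₁ x₂ : ℝ) : deriv (neumannMode h k₁ k₂ g x₁ x₂) 0 = planeWave k₁ k₂ x₁ x₂ • g := by
  have hnorm : √(k₁ ^ 2 + k₂ ^ 2) ≠ 0 := by
    contrapose! hk
    rw [Real.sqrt_eq_zero (by positivity)] at hk
    exact Prod.ext (by nlinarith) (by nlinarith)
  rw [deriv_neumannMode, deriv_verticalProfile_zero hnorm hh, mul_one]

lemma deriv_neumannMode_bottom (h k₁ k₂ : ℝ) (g : ℝ × ℝ) (x₁ x₂ : ℝ) :
    deriv (neumannMode h k₁ k₂ g x₁ x₂) (-h) = 0 := by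
  rw [deriv_neumannMode, deriv_verticalProfile_neg, mul_zero, zero_smul]

lemma horizontalDiv_depthAverage_neumannMode {k₁ k₂ : ℝ} {g : ℝ × ℝ}
    (hg : k₁ * g.1 + k₂ * g.2 = 0) (h x₁ x₂ : ℝ) :
    horizontalDiv (fun y₁ y₂ => depthAverage h (neumannMode h k₁ k₂ g y₁ y₂)) x₁ x₂ = 0 := by
  have haverage (y₁ y₂ : ℝ) : depthAverage h (neumannMode h k₁ k₂ g y₁ y₂) =
      (planeWave k₁ k₂ y₁ y₂ * depthAverage h (verticalProfile √(k₁ ^ 2 + k₂ ^ 2) h)) • g :=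
    depthAverage_const_mul_smul_const h _ _ g
  simp only [haverage, horizontalDiv_planeWave_smul_eq_zero hg]

end Mode

end HydrostaticStokes

open HydrostaticStokes

/-- The single Fourier-mode vector field
`V(x,z) = cos(k·x) (cosh(‖k‖(z+h)) / (‖k‖ sinh(‖k‖h))) g₀`, with `k·g₀ = 0`, has
harmonic components, satisfies the Neumann boundary conditions
`∂_z V(x,0) = cos(k·x) g₀`, `∂_z V(x,-h) = 0`, and its vertical average
`V̄(x) = (1/h)∫_{-h}^0 V(x,z) dz` is horizontally divergence free; i.e. `(V, Pₛ ≡ 0)`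
solves the stationary hydrostatic Stokes equations with Neumann data on the top. -/
theorem stmt_12 (h k₁ k₂ g₁ g₂ : ℝ) (hh : 0 < h) (hk : (k₁, k₂) ≠ (0, 0))
    (horth : k₁ * g₁ + k₂ * g₂ = 0)
    (V : ℝ → ℝ → ℝ → ℝ × ℝ)
    (hV : ∀ x₁ x₂ z : ℝ, V x₁ x₂ z =
      (Real.cos (k₁ * x₁ + k₂ * x₂) *
        (Real.cosh (Real.sqrt (k₁ ^ 2 + k₂ ^ 2) * (z + h)) /
          (Real.sqrt (k₁ ^ 2 + k₂ ^ 2) * Real.sinh (Real.sqrt (k₁ ^ 2 + k₂ ^ 2) * h))))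
        • (g₁, g₂)) :
    -- (i) each component of `V` is harmonic on ℝ³
    ((∀ x₁ x₂ z : ℝ,
      deriv (fun s => deriv (fun t => (V t x₂ z).1) s) x₁ +
      deriv (fun s => deriv (fun t => (V x₁ t z).1) s) x₂ +
      deriv (fun s => deriv (fun t => (V x₁ x₂ t).1) s) z = 0) ∧
     (∀ x₁ x₂ z : ℝ,
      deriv (fun s => deriv (fun t => (V t x₂ z).2) s) x₁ +
      deriv (fun s => deriv (fun t => (V x₁ t z).2) s) x₂ +
      deriv (fun s => deriv (fun t => (V x₁ x₂ t).2) s) z = 0)) ∧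
    -- (ii) Neumann boundary conditions at the top and bottom
    ((∀ x₁ x₂ : ℝ, deriv (fun t => V x₁ x₂ t) 0
        = Real.cos (k₁ * x₁ + k₂ * x₂) • ((g₁, g₂) : ℝ × ℝ)) ∧
     (∀ x₁ x₂ : ℝ, deriv (fun t => V x₁ x₂ t) (-h) = 0)) ∧
    -- (iii) the vertical average is horizontally divergence free
    (∀ x₁ x₂ : ℝ,
      deriv (fun s => ((1 / h) • ∫ z in (-h)..(0 : ℝ), V s x₂ z : ℝ × ℝ).1) x₁ +
      deriv (fun s => ((1 / h) • ∫ z in (-h)..(0 : ℝ), V x₁ s z : ℝ × ℝ).2) x₂ = 0) := by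
  obtain rfl : V = neumannMode h k₁ k₂ (g₁, g₂) := by
    funext x₁ x₂ z
    exact hV x₁ x₂ z
  refine ⟨⟨?_, ?_⟩, ⟨?_, ?_⟩, ?_⟩
  · exact laplacian_planeWave_mul_verticalProfile h k₁ k₂ g₁
  · exact laplacian_planeWave_mul_verticalProfile h k₁ k₂ g₂
  · exact deriv_neumannMode_top hh.ne' hk (g₁, g₂)
  · exact deriv_neumannMode_bottom h k₁ k₂ (g₁, g₂)
  · exact horizontalDiv_depthAverage_neumannMode horth h
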